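/- arXiv:2012.07726 — 2 statements merged into one kernel-verified Lean document; each statement's English description precedes it below -/
import Mathlib

section
/- For each fixed integer r ≥ 3, there exist a constant c > 0 and an integer N such that for all n ≥ N, f_r(n) ≥ c · n^{r-1} · log n / log log n. In other words, f_r(n) = Ω(n^{r-1} log n / log log n). -/
/-- The edge ("window") `{v i, v (i+1), …, v (i+r-1)}` of a tight cycle. -/
def tightWindow {V : Type*} [DecidableEq V] (r : ℕ) {ℓ : ℕ} (v : ZMod ℓ → V)
    (i : ZMod ℓ) : Finset V :=
  Finset.image (fun j : Fin r => v (i + (j : ℕ))) Finset.univ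

/-- `E` contains an `r`-uniform tight cycle of length `ℓ`: distinct vertices
`v 0, …, v (ℓ-1)` all of whose `r`-windows (indices mod `ℓ`) are edges of `E`. -/
def IsTightCycleIn {V : Type*} [DecidableEq V] (r ℓ : ℕ) (E : Set (Finset V)) : Prop :=
  ∃ v : ZMod ℓ → V, Function.Injective v ∧ ∀ i : ZMod ℓ, tightWindow r v i ∈ E

/-- `E` contains an `r`-uniform tight cycle of some length `ℓ > r`. -/
def HasTightCycle {V : Type*} [DecidableEq V] (r : ℕ) (E : Set (Finset V)) : Prop :=
  ∃ ℓ : ℕ, r < ℓ ∧ IsTightCycleIn r ℓ E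

/-- `E` is tight-cycle-free. -/
def TightCycleFree {V : Type*} [DecidableEq V] (r : ℕ) (E : Set (Finset V)) : Prop :=
  ¬ HasTightCycle r E

/-- `f_r(n)`: the maximum number of edges of an `r`-uniform tight-cycle-free
hypergraph on `n` vertices. -/
noncomputable def tightCycleTuran (r n : ℕ) : ℕ :=
  sSup {m | ∃ E : Finset (Finset (Fin n)), (∀ e ∈ E, e.card = r) ∧
    TightCycleFree r (E : Set (Finset (Fin n))) ∧ E.card = m}

/-!
Greedily color the edges of a complete bipartite graph so that every color class has bounded degree
and no cycle of length at most `2 * k`. When no further edge can be colored, an uncolored edge is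
blocked in every color, and counting the blocking reasons shows that at least half of the
edges are colored.

Take `r` parts and label each vertex of the third part by a color, so that every color is the label
of exactly `k` vertices. The edges of the hypergraph are the transversals whose third vertex is
labeled by the color of the edge spanned by the first two. Going once around a tight cycle of length
`r * L`, consecutive edges differ in one part only, so the color never changes. The first two parts
thus carry a monochromatic cycle of length `2 * L`, forcing `k < L`, while the third part carries
`L` distinct vertices with the same label, forcing `L ≤ k`.

The hypergraph has order `n ^ (r - 1) * k` edges, and there are enough vertices for the coloring as
long as `(8 * k) ^ (4 * k) ≤ n`, which allows `k` of order `log n / log (log n)`.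
-/

open Finset

section BipartiteGraph

variable {α β : Type*}

/-- The bipartite graph with adjacency relation `R` contains a cycle
`a 0, b 0, a 1, b 1, …` of length `2 * L`. This is meant for `2 ≤ L`. -/
def HasEvenCycle (R : α → β → Prop) (L : ℕ) : Prop :=
  ∃ (a : ZMod L → α) (b : ZMod L → β), a.Injective ∧ b.Injective ∧
    ∀ t, R (a t) (b t) ∧ R (a (t + 1)) (b t)

/-- The bipartite graph obtained from `R` by adding the edge `a₀ b₀`. -/
def addEdge (R : α → β → Prop) (a₀ : α) (b₀ : β) : α → β → Prop :=
  fun a b => R a b ∨ a = a₀ ∧ b = b₀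

theorem HasEvenCycle.mono {R S : α → β → Prop} {L : ℕ} (h : HasEvenCycle R L) (hRS : R ≤ S) :
    HasEvenCycle S L := by
  obtain ⟨a, b, ha, hb, hab⟩ := h
  exact ⟨a, b, ha, hb, fun t => ⟨hRS _ _ (hab t).1, hRS _ _ (hab t).2⟩⟩

theorem exists_cycle_through_addEdge {R : α → β → Prop} {a₀ : α} {b₀ : β} {L : ℕ}
    (hR : ¬ HasEvenCycle R L) (h : HasEvenCycle (addEdge R a₀ b₀) L) :
    ∃ (a : ZMod L → α) (b : ZMod L → β), a.Injective ∧ b.Injective ∧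
      (∀ t, addEdge R a₀ b₀ (a t) (b t) ∧ addEdge R a₀ b₀ (a (t + 1)) (b t)) ∧
      a 0 = a₀ ∧ b (-1) = b₀ := by
  obtain ⟨a, b, ha, hb, hab⟩ := h
  by_cases hforward : ∃ t, a (t + 1) = a₀ ∧ b t = b₀
  · obtain ⟨t, hat, hbt⟩ := hforward
    refine ⟨fun s => a (t + 1 + s), fun s => b (t + 1 + s), ha.comp (add_right_injective _),
      hb.comp (add_right_injective _), fun s => ?_, by simpa using hat, by simpa using hbt⟩
    simpa only [add_assoc] using hab (t + 1 + s)
  by_cases hbackward : ∃ t, a t = a₀ ∧ b t = b₀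
  · obtain ⟨t, hat, hbt⟩ := hbackward
    refine ⟨fun s => a (t - s), fun s => b (t - s - 1), ha.comp sub_right_injective,
      hb.comp ((sub_left_injective (b := 1)).comp sub_right_injective), fun s => ?_,
      by simpa using hat, by simpa using hbt⟩
    have := hab (t - s - 1)
    rw [sub_add_cancel] at this
    simpa only [sub_add_eq_sub_sub] using this.symm
  · refine absurd ⟨a, b, ha, hb, fun t => ⟨?_, ?_⟩⟩ hR
    · exact (hab t).1.resolve_right fun h => hbackward ⟨t, h⟩
    · exact (hab t).2.resolve_right fun h => hforward ⟨t, h⟩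

variable [Fintype β]

open Classical in
/-- The neighbors of `a` in the bipartite graph `R`; those of `b : β` are `neighbors (flip R) b`. -/
noncomputable def neighbors (R : α → β → Prop) (a : α) : Finset β := {b | R a b}

@[simp]
theorem mem_neighbors {R : α → β → Prop} {a : α} {b : β} : b ∈ neighbors R a ↔ R a b := by
  simp [neighbors]

theorem neighbors_mono {R S : α → β → Prop} (hRS : R ≤ S) (a : α) :
    neighbors R a ⊆ neighbors S a :=
  fun b hb => mem_neighbors.2 (hRS a b (mem_neighbors.1 hb))

theorem card_neighbors_addEdge_le {R : α → β → Prop} {D : ℕ} {a₀ : α} {b₀ : β}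
    (hR : ∀ a, #(neighbors R a) ≤ D) (h₀ : #(neighbors R a₀) < D) (a : α) :
    #(neighbors (addEdge R a₀ b₀) a) ≤ D := by
  classical
  by_cases ha : a = a₀
  · subst ha
    have hsub : neighbors (addEdge R a b₀) a ⊆ insert b₀ (neighbors R a) := fun b hb => by
      simpa [addEdge, or_comm] using hb
    exact (card_le_card hsub).trans ((card_insert_le _ _).trans h₀)
  · have : neighbors (addEdge R a₀ b₀) a = neighbors R a := by ext b; simp [addEdge, ha]
    exact this ▸ hR a

variable [Fintype α]

open Classical in
/-- The endpoints of the walks of length `2 * s + 1` from `a` in the bipartite graph `R`. -/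
noncomputable def walkEnds (R : α → β → Prop) : ℕ → α → Finset β
  | 0, a => neighbors R a
  | s + 1, a => (neighbors R a).biUnion fun b =>
      (neighbors (flip R) b).biUnion fun a' => walkEnds R s a'

open Classical in
/-- The vertices in `β` at distance less than `2 * k` from `a` in the bipartite graph `R`. -/
noncomputable def oddBall (R : α → β → Prop) (k : ℕ) (a : α) : Finset β :=
  (range k).biUnion fun s => walkEnds R s a

theorem mem_walkEnds_of_walk {R : α → β → Prop} {s : ℕ} (a : ℕ → α) (b : ℕ → β)
    (hab : ∀ i ≤ s, R (a i) (b i)) (hba : ∀ i < s, R (a (i + 1)) (b i)) :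
    b s ∈ walkEnds R s (a 0) := by
  induction s generalizing a b with
  | zero => simpa [walkEnds] using hab 0 le_rfl
  | succ s ih =>
    simp only [walkEnds, mem_biUnion, mem_neighbors]
    exact ⟨b 0, hab 0 (by omega), a 1, hba 0 (by omega),
      ih (fun i => a (i + 1)) (fun i => b (i + 1)) (fun i hi => hab (i + 1) (by omega))
        (fun i hi => hba (i + 1) (by omega))⟩

theorem mem_walkEnds_of_hasEvenCycle_addEdge {R : α → β → Prop} {a₀ : α} {b₀ : β} {L : ℕ}
    (hL : 2 ≤ L) (hR : ¬ HasEvenCycle R L) (h : HasEvenCycle (addEdge R a₀ b₀) L) :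
    b₀ ∈ walkEnds R (L - 1) a₀ := by
  obtain ⟨a, b, ha, hb, hab, rfl, rfl⟩ := exists_cycle_through_addEdge hR h
  have : Fact (1 < L) := ⟨hL⟩
  have hlast : ((L - 1 : ℕ) : ZMod L) = -1 := by simp [Nat.cast_sub (one_le_two.trans hL)]
  rw [← hlast, ← Nat.cast_zero]
  refine mem_walkEnds_of_walk (fun i => a i) (fun i => b i) (fun i _ => ?_) fun i hi => ?_
  · refine (hab i).1.resolve_right fun ⟨hai, hbi⟩ => ?_
    have : (-1 : ZMod L) = 0 := (hb hbi).symm.trans (ha hai)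
    exact one_ne_zero (neg_eq_zero.1 this)
  · rw [Nat.cast_succ]
    refine (hab i).2.resolve_right fun ⟨_, hbi⟩ => ?_
    have hdvd : L ∣ i + 1 := by
      rw [← ZMod.natCast_eq_zero_iff, Nat.cast_succ, hb hbi, neg_add_cancel]
    exact absurd (Nat.le_of_dvd i.succ_pos hdvd) (by omega)

/-- The bipartite graph `R` has maximum degree at most `D` and no cycle of length at most
`2 * k`. -/
structure IsSparse (k D : ℕ) (R : α → β → Prop) : Prop where
  card_neighbors_le : ∀ a, #(neighbors R a) ≤ D
  card_neighbors_flip_le : ∀ b, #(neighbors (flip R) b) ≤ D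
  not_hasEvenCycle : ∀ L, 2 ≤ L → L ≤ k → ¬ HasEvenCycle R L

/-- The reasons why adding the edge `a b` to a sparse bipartite graph `R` may destroy sparseness:
one of its ends has full degree, or it closes a short cycle. -/
def EdgeBlocked (k D : ℕ) (R : α → β → Prop) (a : α) (b : β) : Prop :=
  D ≤ #(neighbors R a) ∨ D ≤ #(neighbors (flip R) b) ∨ b ∈ oddBall R k a

namespace IsSparse

variable {k D : ℕ} {R S : α → β → Prop}

theorem mono (h : IsSparse k D S) (hRS : R ≤ S) : IsSparse k D R where
  card_neighbors_le a := (card_le_card (neighbors_mono hRS a)).trans (h.card_neighbors_le a)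
  card_neighbors_flip_le b :=
    (card_le_card (neighbors_mono (fun b a => hRS a b) b)).trans (h.card_neighbors_flip_le b)
  not_hasEvenCycle L hL hLk hR := h.not_hasEvenCycle L hL hLk (hR.mono hRS)

theorem addEdge (h : IsSparse k D R) {a : α} {b : β} (hab : ¬ EdgeBlocked k D R a b) :
    IsSparse k D (addEdge R a b) := by
  classical
  simp only [EdgeBlocked, not_or, not_le] at hab
  obtain ⟨ha, hb, hball⟩ := hab
  refine ⟨card_neighbors_addEdge_le h.card_neighbors_le ha, fun b' => ?_, fun L hL hLk hcyc => ?_⟩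
  · have hflip : flip (_root_.addEdge R a b) = _root_.addEdge (flip R) b a := by
      ext; simp [_root_.addEdge, flip, and_comm]
    rw [hflip]
    exact card_neighbors_addEdge_le h.card_neighbors_flip_le hb b'
  · have hmem := mem_walkEnds_of_hasEvenCycle_addEdge hL (h.not_hasEvenCycle L hL hLk) hcyc
    exact hball (mem_biUnion.2 ⟨L - 1, mem_range.2 (by omega), hmem⟩)

theorem card_walkEnds_le (h : IsSparse k D R) (s : ℕ) (a : α) :
    #(walkEnds R s a) ≤ D ^ (2 * s + 1) := by
  classical
  induction s generalizing a with
  | zero => simpa [walkEnds] using h.card_neighbors_le a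
  | succ s ih =>
    calc #(walkEnds R (s + 1) a)
        ≤ #(neighbors R a) * (D * D ^ (2 * s + 1)) := by
          refine card_biUnion_le_card_mul _ _ _ fun b _ => ?_
          exact (card_biUnion_le_card_mul _ _ _ fun a' _ => ih a').trans
            (Nat.mul_le_mul_right _ (h.card_neighbors_flip_le b))
      _ ≤ D * (D * D ^ (2 * s + 1)) := Nat.mul_le_mul_right _ (h.card_neighbors_le a)
      _ = D ^ (2 * (s + 1) + 1) := by ring

theorem card_oddBall_le (h : IsSparse k D R) (hD : 0 < D) (a : α) :
    #(oddBall R k a) ≤ k * D ^ (2 * k) := by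
  classical
  have hwalk : ∀ s ∈ range k, #(walkEnds R s a) ≤ D ^ (2 * k) := fun s hs =>
    (h.card_walkEnds_le s a).trans
      (Nat.pow_le_pow_right hD (by have := mem_range.1 hs; omega))
  simpa [oddBall] using card_biUnion_le_card_mul _ _ _ hwalk

end IsSparse

end BipartiteGraph

section SparseColoring

variable {α β J : Type*}

/-- The bipartite graph formed by the edges of color `j` in a partial coloring of the edges of the
complete bipartite graph on `α` and `β`; uncolored edges have color `none`. -/
def colorClass (col : α × β → Option J) (j : J) : α → β → Prop := fun a b => col (a, b) = some j

theorem colorClass_update_le [DecidableEq α] [DecidableEq β] (col : α × β → Option J) (a : α)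
    (b : β) (j : J) :
    colorClass (Function.update col (a, b) (some j)) j ≤ addEdge (colorClass col j) a b := by
  intro a' b' h
  by_cases hab : (a', b') = (a, b)
  · exact Or.inr (Prod.mk.inj hab)
  · exact Or.inl (by simpa only [colorClass, Function.update_of_ne hab] using h)

theorem colorClass_update_le_of_ne [DecidableEq α] [DecidableEq β] (col : α × β → Option J)
    (a : α) (b : β) {i j : J} (hij : i ≠ j) :
    colorClass (Function.update col (a, b) (some j)) i ≤ colorClass col i := by
  intro a' b' h
  by_cases hab : (a', b') = (a, b)
  · rw [colorClass, hab, Function.update_self] at h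
    exact absurd (Option.some.inj h).symm hij
  · simpa only [colorClass, Function.update_of_ne hab] using h

theorem card_large_fibers_le [Fintype α] [Fintype J] [DecidableEq J] (f : α → Option J) {D : ℕ}
    (hD : 0 < D) : #{j | D ≤ #{a | f a = some j}} ≤ Fintype.card α / D := by
  rw [Nat.le_div_iff_mul_le hD]
  set large : Finset J := {j | D ≤ #{a | f a = some j}}
  calc #large * D ≤ ∑ j ∈ large, #{a | f a = some j} := by
        simpa only [smul_eq_mul] using
          card_nsmul_le_sum large _ D fun j hj => (mem_filter.1 hj).2
    _ = ∑ o ∈ large.map Function.Embedding.some, #{a | f a = o} := by simp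
    _ = #{a | f a ∈ large.map Function.Embedding.some} := sum_card_fiberwise_eq_card_filter _ _ _
    _ ≤ Fintype.card α := card_le_univ _

theorem neighbors_colorClass [Fintype β] [DecidableEq J] (col : α × β → Option J) (j : J) (a : α) :
    neighbors (colorClass col j) a = ({b | col (a, b) = some j} : Finset β) := by
  ext; simp [colorClass]

theorem neighbors_flip_colorClass [Fintype α] [DecidableEq J] (col : α × β → Option J) (j : J)
    (b : β) : neighbors (flip (colorClass col j)) b = ({a | col (a, b) = some j} : Finset α) := by
  ext; simp [colorClass, flip]

variable [Fintype α] [Fintype β]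

/-- Every color class of the partial coloring `col` is a sparse bipartite graph. -/
def IsSparseColoring (k D : ℕ) (col : α × β → Option J) : Prop :=
  ∀ j, IsSparse k D (colorClass col j)

theorem isSparseColoring_none (k D : ℕ) :
    IsSparseColoring k D fun _ : α × β => (none : Option J) := fun j =>
  { card_neighbors_le := fun a => by simp [neighbors, colorClass]
    card_neighbors_flip_le := fun b => by simp [neighbors, colorClass, flip]
    not_hasEvenCycle := by
      rintro L _ _ ⟨a, b, _, _, h⟩
      exact Option.some_ne_none j (h 0).1.symm }

theorem IsSparseColoring.update [DecidableEq α] [DecidableEq β] {k D : ℕ} {col : α × β → Option J}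
    (h : IsSparseColoring k D col) {a : α} {b : β} {j : J}
    (hab : ¬ EdgeBlocked k D (colorClass col j) a b) :
    IsSparseColoring k D (Function.update col (a, b) (some j)) := by
  intro i
  by_cases hij : i = j
  · subst hij
    exact ((h i).addEdge hab).mono (colorClass_update_le col a b i)
  · exact (h i).mono (colorClass_update_le_of_ne col a b hij)

theorem exists_isSparseColoring_forall_edgeBlocked [Finite J] (k D : ℕ) :
    ∃ col : α × β → Option J, IsSparseColoring k D col ∧
      ∀ a b, col (a, b) = none → ∀ j, EdgeBlocked k D (colorClass col j) a b := by
  classical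
  obtain ⟨col, hcol, hmax⟩ := Set.exists_max_image
    {col : α × β → Option J | IsSparseColoring k D col} (fun col => #{e | (col e).isSome})
    (Set.toFinite _) ⟨_, isSparseColoring_none k D⟩
  refine ⟨col, hcol, fun a b hab j => ?_⟩
  by_contra hblock
  refine (hmax _ (IsSparseColoring.update hcol hblock)).not_gt (card_lt_card ?_)
  refine (ssubset_iff_of_subset fun e he => ?_).2 ⟨(a, b), by simp, by simp [hab]⟩
  by_cases heab : e = (a, b)
  · simp [heab]
  · simpa [Function.update_of_ne heab] using he

variable [Fintype J]

open Classical in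
theorem card_colors_edgeBlocked_le (col : α × β → Option J) (k : ℕ) {D : ℕ} (hD : 0 < D) (a : α)
    (b : β) : #{j | EdgeBlocked k D (colorClass col j) a b} ≤
      Fintype.card α / D + Fintype.card β / D + #{j | b ∈ oddBall (colorClass col j) k a} := by
  have hα := card_large_fibers_le (fun a' => col (a', b)) hD
  have hβ := card_large_fibers_le (fun b' => col (a, b')) hD
  simp only [← neighbors_colorClass, ← neighbors_flip_colorClass] at hα hβ
  calc #{j | EdgeBlocked k D (colorClass col j) a b}
      ≤ #(({j | D ≤ #(neighbors (flip (colorClass col j)) b)} : Finset J) ∪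
            ({j | D ≤ #(neighbors (colorClass col j) a)} : Finset J) ∪
            ({j | b ∈ oddBall (colorClass col j) k a} : Finset J)) :=
        card_le_card fun j hj => by
          simp only [mem_filter_univ, mem_union] at hj ⊢
          unfold EdgeBlocked at hj
          tauto
    _ ≤ _ := (card_union_le _ _).trans
        (Nat.add_le_add_right ((card_union_le _ _).trans (Nat.add_le_add hα hβ)) _)

open Classical in
theorem IsSparseColoring.sum_card_colors_oddBall_le {k D : ℕ} {col : α × β → Option J}
    (h : IsSparseColoring k D col) (hD : 0 < D) (a : α) :
    ∑ b, #{j | b ∈ oddBall (colorClass col j) k a} ≤ Fintype.card J * (k * D ^ (2 * k)) := by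
  calc ∑ b, #{j | b ∈ oddBall (colorClass col j) k a}
      = ∑ j, #{b | b ∈ oddBall (colorClass col j) k a} :=
        sum_card_bipartiteAbove_eq_sum_card_bipartiteBelow
          fun b j => b ∈ oddBall (colorClass col j) k a
    _ = ∑ j, #(oddBall (colorClass col j) k a) := by simp only [filter_univ_mem]
    _ ≤ #(univ : Finset J) • (k * D ^ (2 * k)) :=
        sum_le_card_nsmul _ _ _ fun j _ => (h j).card_oddBall_le hD a
    _ = Fintype.card J * (k * D ^ (2 * k)) := rfl

theorem IsSparseColoring.two_mul_card_uncolored_le [Nonempty J] {k D : ℕ}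
    {col : α × β → Option J} (h : IsSparseColoring k D col) (hD : 0 < D) {a : α}
    (hblock : ∀ b, col (a, b) = none → ∀ j, EdgeBlocked k D (colorClass col j) a b)
    (hJ : 2 * (Fintype.card α / D + Fintype.card β / D) ≤ Fintype.card J)
    (hβ : 4 * (k * D ^ (2 * k)) ≤ Fintype.card β) :
    2 * #{b | ¬ (col (a, b)).isSome} ≤ Fintype.card β := by
  classical
  set uncolored : Finset β := {b | ¬ (col (a, b)).isSome}
  set q := Fintype.card α / D + Fintype.card β / D
  have hcolors : ∀ b ∈ uncolored,
      Fintype.card J ≤ q + #{j | b ∈ oddBall (colorClass col j) k a} := fun b hb => by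
    have hb : col (a, b) = none := by simpa [uncolored] using hb
    simpa [hblock b hb] using card_colors_edgeBlocked_le col k hD a b
  have hsum : #uncolored * Fintype.card J ≤
      #uncolored * q + Fintype.card J * (k * D ^ (2 * k)) :=
    calc #uncolored * Fintype.card J
        ≤ ∑ b ∈ uncolored, (q + #{j | b ∈ oddBall (colorClass col j) k a}) :=
          card_nsmul_le_sum _ _ _ hcolors
      _ = #uncolored * q + ∑ b ∈ uncolored, #{j | b ∈ oddBall (colorClass col j) k a} := by
          rw [sum_add_distrib, sum_const, smul_eq_mul]
      _ ≤ #uncolored * q + ∑ b, #{j | b ∈ oddBall (colorClass col j) k a} := by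
          gcongr
          exact subset_univ _
      _ ≤ #uncolored * q + Fintype.card J * (k * D ^ (2 * k)) := by
          gcongr
          exact h.sum_card_colors_oddBall_le hD a
  have hJ' : #uncolored * (2 * q) ≤ #uncolored * Fintype.card J := Nat.mul_le_mul_left _ hJ
  have hβ' : Fintype.card J * (4 * (k * D ^ (2 * k))) ≤ Fintype.card J * Fintype.card β :=
    Nat.mul_le_mul_left _ hβ
  exact Nat.le_of_mul_le_mul_left (by linarith) (Fintype.card_pos (α := J))

theorem exists_isSparseColoring [Nonempty J] {k D : ℕ} (hD : 0 < D)
    (hJ : 2 * (Fintype.card α / D + Fintype.card β / D) ≤ Fintype.card J)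
    (hβ : 4 * (k * D ^ (2 * k)) ≤ Fintype.card β) :
    ∃ col : α × β → Option J, IsSparseColoring k D col ∧
      Fintype.card α * Fintype.card β ≤ 2 * #{e | (col e).isSome} := by
  obtain ⟨col, hcol, hblock⟩ := exists_isSparseColoring_forall_edgeBlocked (α := α) (β := β)
    (J := J) k D
  refine ⟨col, hcol, ?_⟩
  have hrow : ∀ a, Fintype.card β ≤ 2 * #{b | (col (a, b)).isSome} := fun a => by
    have huncolored := hcol.two_mul_card_uncolored_le hD (hblock a) hJ hβ
    have hsplit := card_filter_add_card_filter_not (s := (univ : Finset β))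
      fun b => (col (a, b)).isSome
    rw [card_univ] at hsplit
    omega
  calc Fintype.card α * Fintype.card β
      ≤ ∑ a, 2 * #{b | (col (a, b)).isSome} := card_nsmul_le_sum univ _ _ fun a _ => hrow a
    _ = 2 * #{e | (col e).isSome} := by
        simp only [← mul_sum, card_filter, Fintype.sum_prod_type]

end SparseColoring

section TransversalWindows

variable {r : ℕ} {α : Type*}

/-- The transversal `{(y, x y) | y : Fin r}` of the `r` parts `{y} × α`. -/
def transversal [DecidableEq α] (x : Fin r → α) : Finset (Fin r × α) :=
  univ.image fun y => (y, x y)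

theorem mem_transversal [DecidableEq α] {x : Fin r → α} {u : Fin r × α} :
    u ∈ transversal x ↔ x u.1 = u.2 := by
  simp [transversal, Prod.ext_iff]

theorem card_transversal [DecidableEq α] (x : Fin r → α) : #(transversal x) = r := by
  rw [transversal, card_image_of_injective _ fun y z h => congrArg Prod.fst h, card_fin]

theorem transversal_injective [DecidableEq α] :
    Function.Injective (transversal : (Fin r → α) → Finset (Fin r × α)) := fun x y h =>
  funext fun i => (mem_transversal.1 (h ▸ mem_transversal.2 rfl : (i, x i) ∈ transversal y)).symm

/-- Every window `w i, …, w (i + r - 1)` of the sequence `w` is the transversal given by `x i`.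
Unrolling a tight cycle to a sequence indexed by `ℤ` lets windows be compared by order. -/
def HasTransversalWindows (w : ℤ → Fin r × α) (x : ℤ → Fin r → α) : Prop :=
  ∀ i, w '' Set.Ico i (i + r) = {u | x i u.1 = u.2}

theorem image_Ico_eq_tightWindow {V : Type*} [DecidableEq V] {ℓ : ℕ} (v : ZMod ℓ → V) (i : ℤ) :
    (fun q : ℤ => v q) '' Set.Ico i (i + r) = tightWindow r v i := by
  ext u
  simp only [tightWindow, Set.mem_image, Set.mem_Ico, coe_image, coe_univ, Set.image_univ,
    Set.mem_range]
  constructor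
  · rintro ⟨q, ⟨hiq, hqr⟩, rfl⟩
    lift q - i to ℕ using by omega with d hd
    obtain rfl : q = i + d := by omega
    exact ⟨⟨d, by omega⟩, by push_cast; rfl⟩
  · rintro ⟨d, rfl⟩
    exact ⟨i + d, ⟨by omega, by omega⟩, by push_cast; rfl⟩

theorem hasTransversalWindows_of_tightWindow_eq [DecidableEq α] {ℓ : ℕ} {v : ZMod ℓ → Fin r × α}
    {x : ZMod ℓ → Fin r → α} (h : ∀ i, tightWindow r v i = transversal (x i)) :
    HasTransversalWindows (fun q : ℤ => v q) (fun i : ℤ => x i) := by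
  intro i
  rw [image_Ico_eq_tightWindow, h]
  ext u
  exact mem_transversal

namespace HasTransversalWindows

variable {w : ℤ → Fin r × α} {x : ℤ → Fin r → α}

theorem apply_part (h : HasTransversalWindows w x) {i q : ℤ} (hq : q ∈ Set.Ico i (i + r)) :
    x i (w q).1 = (w q).2 :=
  (h i).subset (Set.mem_image_of_mem w hq)

theorem exists_mem_window (h : HasTransversalWindows w x) (i : ℤ) (y : Fin r) :
    ∃ q ∈ Set.Ico i (i + r), w q = (y, x i y) :=
  (h i).superset (rfl : x i y = x i y)

theorem injOn_part (h : HasTransversalWindows w x) (i : ℤ) :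
    Set.InjOn (fun q => (w q).1) (Set.Ico i (i + r)) := by
  rw [← coe_Ico]
  refine injOn_of_surjOn_of_card_le (t := univ) _ (fun _ _ => mem_univ _) (fun y _ => ?_) (by simp)
  obtain ⟨q, hq, hwq⟩ := h.exists_mem_window i y
  exact ⟨q, by simpa using hq, by simp [hwq]⟩

theorem periodic_part (h : HasTransversalWindows w x) :
    Function.Periodic (fun q => (w q).1) (r : ℤ) := by
  intro i
  obtain ⟨q, ⟨hiq, hqr⟩, hwq⟩ := h.exists_mem_window i (w (i + r)).1
  have hpart : (w q).1 = (w (i + r)).1 := by rw [hwq]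
  rcases hiq.eq_or_lt with rfl | hlt
  · exact hpart.symm
  · have := h.injOn_part (i + 1) ⟨by omega, by omega⟩ ⟨by omega, by omega⟩ hpart
    omega

theorem part_add_mul (h : HasTransversalWindows w x) (q t : ℤ) :
    (w (q + r * t)).1 = (w q).1 := by
  rw [mul_comm]
  exact h.periodic_part.int_mul t q

theorem dvd_of_apply_eq (h : HasTransversalWindows w x) {ℓ : ℤ} (hℓ : w ℓ = w 0) :
    (r : ℤ) ∣ ℓ := by
  have hr : (0 : ℤ) < r := by exact_mod_cast (w 0).1.pos
  have hpart : (w (ℓ % r)).1 = (w 0).1 := by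
    rw [← h.part_add_mul _ (ℓ / r), Int.emod_add_mul_ediv, hℓ]
  refine Int.dvd_of_emod_eq_zero (h.injOn_part 0 ⟨?_, ?_⟩ ⟨le_rfl, by simpa using hr⟩ hpart)
  · exact Int.emod_nonneg _ hr.ne'
  · simpa using Int.emod_lt_of_pos ℓ hr

theorem apply_succ (h : HasTransversalWindows w x) {i : ℤ} {y : Fin r} (hy : y ≠ (w i).1) :
    x (i + 1) y = x i y := by
  obtain ⟨q, ⟨hiq, hqr⟩, hwq⟩ := h.exists_mem_window i y
  have hne : i ≠ q := by
    rintro rfl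
    exact hy (by rw [hwq])
  simpa [hwq] using h.apply_part (i := i + 1) (q := q) ⟨by omega, by omega⟩

theorem apply_succ_part (h : HasTransversalWindows w x) (i : ℤ) :
    x (i + 1) (w i).1 = x (i + r) (w i).1 := by
  have := (w 0).1.pos
  have hpart : (w (i + r)).1 = (w i).1 := h.periodic_part i
  rw [← hpart, h.apply_part ⟨by omega, by omega⟩, h.apply_part ⟨by omega, by omega⟩]

theorem apply_add_mul_eq_iff (h : HasTransversalWindows w x) {L : ℕ}
    (hw : ∀ s t, w s = w t ↔ ((r * L : ℕ) : ℤ) ∣ s - t) (i : ℤ) (y : Fin r) (s t : ℤ) :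
    x (i + r * s) y = x (i + r * t) y ↔ (L : ℤ) ∣ s - t := by
  have hr : (r : ℤ) ≠ 0 := by exact_mod_cast y.pos.ne'
  obtain ⟨q, ⟨hiq, hqr⟩, hwq⟩ := h.exists_mem_window i y
  have hpart : ∀ t, (w (q + r * t)).1 = y := fun t => by rw [h.part_add_mul, hwq]
  have hx : ∀ t, x (i + r * t) y = (w (q + r * t)).2 := fun t => by
    rw [← h.apply_part (i := i + r * t) ⟨by omega, by omega⟩, hpart]
  calc x (i + r * s) y = x (i + r * t) y ↔ w (q + r * s) = w (q + r * t) := by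
        rw [hx, hx, Prod.ext_iff, hpart, hpart, eq_self_iff_true, true_and]
    _ ↔ (L : ℤ) ∣ s - t := by
        rw [hw, add_sub_add_left_eq_sub, ← mul_sub, Nat.cast_mul, mul_dvd_mul_iff_left hr]

/-- Moving a window by one step changes the transversal in one part only, and the color can be
read off either without the part `y₂` or from the part `y₂` alone. -/
theorem exists_color_eq {J : Type*} {col : α × α → Option J} {g : α → J} {y₀ y₁ y₂ : Fin r}
    (h : HasTransversalWindows w x) (h₀₂ : y₀ ≠ y₂) (h₁₂ : y₁ ≠ y₂)
    (hcol : ∀ i, col (x i y₀, x i y₁) = some (g (x i y₂))) : ∃ j, ∀ i, g (x i y₂) = j := by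
  have hstep : Function.Periodic (fun i => g (x i y₂)) (1 : ℤ) := fun i => by
    by_cases hy : y₂ = (w i).1
    · refine Option.some_injective _ ?_
      rw [← hcol, ← hcol, h.apply_succ (hy ▸ h₀₂), h.apply_succ (hy ▸ h₁₂)]
    · exact congrArg g (h.apply_succ hy)
  exact ⟨_, fun i => by simpa using hstep.int_mul_eq i⟩

end HasTransversalWindows

theorem exists_injective_zmod {L : ℕ} {a : ℤ → α} (ha : ∀ s t, a s = a t ↔ (L : ℤ) ∣ s - t) :
    ∃ a' : ZMod L → α, a'.Injective ∧ ∀ t : ℤ, a' t = a t := by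
  refine ⟨fun t => a t.cast, fun s t hst => ?_, fun t => (ha _ _).2 ?_⟩
  · rwa [ha, ← ZMod.intCast_eq_intCast_iff_dvd_sub, ZMod.intCast_zmod_cast,
      ZMod.intCast_zmod_cast, eq_comm] at hst
  · rw [← ZMod.intCast_eq_intCast_iff_dvd_sub, ZMod.intCast_zmod_cast]

theorem HasTransversalWindows.exists_hasEvenCycle {J : Type*} {w : ℤ → Fin r × α}
    {x : ℤ → Fin r → α} {L : ℕ} {col : α × α → Option J} {g : α → J} {y₀ y₁ y₂ : Fin r}
    (h : HasTransversalWindows w x) (hw : ∀ s t, w s = w t ↔ ((r * L : ℕ) : ℤ) ∣ s - t)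
    (h₀₁ : y₀ ≠ y₁) (h₀₂ : y₀ ≠ y₂) (h₁₂ : y₁ ≠ y₂)
    (hcol : ∀ i, col (x i y₀, x i y₁) = some (g (x i y₂))) :
    ∃ j, HasEvenCycle (colorClass col j) L ∧ ∃ c : ZMod L → α, c.Injective ∧ ∀ t, g (c t) = j := by
  obtain ⟨j, hj⟩ := h.exists_color_eq h₀₂ h₁₂ hcol
  obtain ⟨p, -, hp⟩ := h.exists_mem_window 0 y₀
  have hpart : ∀ t, (w (p + r * t)).1 = y₀ := fun t => by rw [h.part_add_mul, hp]
  have hwindow := h.apply_add_mul_eq_iff hw p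
  obtain ⟨a, ha, ha_apply⟩ := exists_injective_zmod (hwindow y₀)
  obtain ⟨b, hb, hb_apply⟩ := exists_injective_zmod (hwindow y₁)
  obtain ⟨c, hc, hc_apply⟩ := exists_injective_zmod (hwindow y₂)
  refine ⟨j, ⟨a, b, ha, hb, fun t => ?_⟩, c, hc, fun t => ?_⟩
  · obtain ⟨t, rfl⟩ := ZMod.intCast_surjective t
    have hnext : x (p + r * t + 1) y₀ = a (t + 1 : ℤ) := by
      rw [ha_apply, ← hpart t, h.apply_succ_part, mul_add, mul_one, add_assoc]
    have hsame : x (p + r * t + 1) y₁ = b t := by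
      rw [hb_apply, h.apply_succ (by rw [hpart]; exact h₀₁.symm)]
    constructor
    · rw [colorClass, ha_apply, hb_apply, hcol, hj]
    · rw [← Int.cast_one, ← Int.cast_add, colorClass, ← hnext, ← hsame, hcol, hj]
  · obtain ⟨t, rfl⟩ := ZMod.intCast_surjective t
    rw [hc_apply, hj]

end TransversalWindows

section ColorHypergraph

variable {α J : Type*} [Fintype α] [DecidableEq α] [DecidableEq J]

/-- The `(m + 3)`-partite hypergraph whose edges are the transversals `x` such that the edge
`x 0, x 1` of the complete bipartite graph on `α` and `α` is colored with the label of `x 2`. -/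
def colorHypergraph (m : ℕ) (col : α × α → Option J) (g : α → J) :
    Finset (Finset (Fin (m + 3) × α)) :=
  ({x | col (x 0, x 1) = some (g (x 2))} : Finset (Fin (m + 3) → α)).image transversal

theorem tightCycleFree_colorHypergraph (m : ℕ) {k : ℕ} {col : α × α → Option J} {g : α → J}
    (hcol : ∀ j L, 2 ≤ L → L ≤ k → ¬ HasEvenCycle (colorClass col j) L)
    (hg : ∀ j, #{c | g c = j} ≤ k) :
    TightCycleFree (m + 3) (colorHypergraph m col g : Set (Finset (Fin (m + 3) × α))) := by
  rintro ⟨ℓ, hℓ, v, hv, hvE⟩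
  simp only [colorHypergraph, coe_image, coe_filter, mem_univ, true_and, Set.mem_image,
    Set.mem_ofPred_eq] at hvE
  choose x hx hxv using hvE
  have hwin := hasTransversalWindows_of_tightWindow_eq fun i => (hxv i).symm
  have hperiod : ∀ s t : ℤ, v s = v t ↔ (ℓ : ℤ) ∣ s - t := fun s t => by
    rw [hv.eq_iff, eq_comm, ZMod.intCast_eq_intCast_iff_dvd_sub]
  obtain ⟨L, rfl⟩ : m + 3 ∣ ℓ := by
    exact_mod_cast hwin.dvd_of_apply_eq ((hperiod ℓ 0).2 (by simp))
  have hL : 2 ≤ L := by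
    by_contra! hL
    interval_cases L <;> omega
  obtain ⟨j, hcycle, c, hc, hcj⟩ := hwin.exists_hasEvenCycle hperiod (y₀ := 0) (y₁ := 1) (y₂ := 2)
    (by simp) (by simp [Fin.ext_iff, Nat.mod_eq_of_lt]) (by simp [Fin.ext_iff, Nat.mod_eq_of_lt])
    fun i => hx i
  have : NeZero L := ⟨by omega⟩
  refine hcol j L hL ?_ hcycle
  calc L = #(univ : Finset (ZMod L)) := (ZMod.card L).symm
    _ ≤ #{c | g c = j} := card_le_card_of_injOn c (fun t _ => by simp [hcj]) hc.injOn
    _ ≤ k := hg j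

theorem card_eq_of_mem_colorHypergraph {m : ℕ} {col : α × α → Option J} {g : α → J}
    {e : Finset (Fin (m + 3) × α)} (he : e ∈ colorHypergraph m col g) : #e = m + 3 := by
  obtain ⟨x, -, rfl⟩ := mem_image.1 he
  exact card_transversal x

theorem card_colored_mul_le_card_colorHypergraph (m : ℕ) {k : ℕ} (col : α × α → Option J)
    {g : α → J} (hg : ∀ j, k ≤ #{c | g c = j}) :
    #{e | (col e).isSome} * k * Fintype.card α ^ m ≤ #(colorHypergraph m col g) := by
  let triples : Finset (Σ _ : α × α, α) :=
    ({e | (col e).isSome} : Finset (α × α)).sigma fun e => {c | col e = some (g c)}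
  have htriples : #{e | (col e).isSome} * k ≤ #triples := by
    rw [card_sigma, ← smul_eq_mul]
    refine card_nsmul_le_sum _ _ _ fun e he => ?_
    obtain ⟨j, hj⟩ := Option.isSome_iff_exists.1 (mem_filter.1 he).2
    simpa only [hj, Option.some_inj, eq_comm] using hg j
  calc #{e | (col e).isSome} * k * Fintype.card α ^ m
      ≤ #triples * Fintype.card α ^ m := Nat.mul_le_mul_right _ htriples
    _ = #(triples ×ˢ (univ : Finset (Fin m → α))) := by simp
    _ ≤ #{x : Fin (m + 3) → α | col (x 0, x 1) = some (g (x 2))} := by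
        refine card_le_card_of_injOn (fun p => Fin.cons p.1.1.1 <| Fin.cons p.1.1.2 <|
          Fin.cons p.1.2 p.2) ?_ ?_
        · rintro ⟨⟨⟨a, b⟩, c⟩, y⟩ hp
          simp only [triples, coe_product, coe_univ, coe_sigma, Set.mem_prod] at hp
          exact mem_filter.2 ⟨mem_univ _, (mem_filter.1 hp.1.2).2⟩
        · rintro ⟨⟨⟨a, b⟩, c⟩, y⟩ - ⟨⟨⟨a', b'⟩, c'⟩, y'⟩ - h
          simp only [Fin.cons_inj] at h
          obtain ⟨rfl, rfl, rfl, rfl⟩ := h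
          rfl
    _ = #(colorHypergraph m col g) := (card_image_of_injective _ transversal_injective).symm

end ColorHypergraph

section Turan

theorem TightCycleFree.image_map {V W : Type*} [DecidableEq V] [DecidableEq W] {r : ℕ}
    (hr : 0 < r) {E : Set (Finset V)} (hE : TightCycleFree r E) (f : V ↪ W) :
    TightCycleFree r (Finset.map f '' E) := by
  rintro ⟨ℓ, hℓ, v, hv, hvE⟩
  have hrange : ∀ i, ∃ u, f u = v i := fun i => by
    obtain ⟨e, -, he⟩ := hvE i
    have hi : v i ∈ e.map f := he ▸ mem_image.2 ⟨⟨0, hr⟩, mem_univ _, by simp⟩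
    obtain ⟨u, -, hu⟩ := mem_map.1 hi
    exact ⟨u, hu⟩
  choose u hu using hrange
  obtain rfl : f ∘ u = v := funext hu
  refine hE ⟨ℓ, hℓ, u, hv.of_comp, fun i => ?_⟩
  obtain ⟨e, he, hei⟩ := hvE i
  have hwindow : (tightWindow r u i).map f = tightWindow r (f ∘ u) i := by
    simp only [tightWindow, map_eq_image, image_image, Function.comp_def]
  rwa [← map_injective f (hei.trans hwindow.symm)]

theorem card_le_tightCycleTuran {V : Type*} [Fintype V] [DecidableEq V] {r n : ℕ} (hr : 0 < r)
    (hn : Fintype.card V ≤ n) {E : Finset (Finset V)} (hcard : ∀ e ∈ E, #e = r)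
    (hE : TightCycleFree r (E : Set (Finset V))) : #E ≤ tightCycleTuran r n := by
  obtain ⟨f⟩ : Nonempty (V ↪ Fin n) := Function.Embedding.nonempty_of_card_le (by simpa using hn)
  refine le_csSup ⟨Fintype.card (Finset (Fin n)), ?_⟩
    ⟨E.image (Finset.map f), ?_, ?_, card_image_of_injective _ (map_injective f)⟩
  · rintro _ ⟨E', -, -, rfl⟩
    exact card_le_univ E'
  · simpa using hcard
  · rw [coe_image]
    exact hE.image_map hr f

theorem card_colored_mul_le_tightCycleTuran {α J : Type*} [Fintype α] [DecidableEq J]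
    {m k n : ℕ} {col : α × α → Option J} {g : α → J}
    (hcol : ∀ j L, 2 ≤ L → L ≤ k → ¬ HasEvenCycle (colorClass col j) L)
    (hg : ∀ j, #{c | g c = j} = k) (hn : (m + 3) * Fintype.card α ≤ n) :
    #{e | (col e).isSome} * k * Fintype.card α ^ m ≤ tightCycleTuran (m + 3) n := by
  classical
  exact (card_colored_mul_le_card_colorHypergraph m col fun j => (hg j).ge).trans <|
    card_le_tightCycleTuran (by omega) (by simpa using hn)
      (fun _ he => card_eq_of_mem_colorHypergraph he)
      (tightCycleFree_colorHypergraph m hcol fun j => (hg j).le)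

theorem pow_mul_le_two_mul_tightCycleTuran {m k M n : ℕ} (hk : 0 < k)
    (hM : 4 * (8 * k) ^ (2 * k) ≤ M) (hn : (m + 3) * (M * k) ≤ n) :
    (M * k) ^ (m + 2) * k ≤ 2 * tightCycleTuran (m + 3) n := by
  have hM₀ : 0 < M := lt_of_lt_of_le (by positivity) hM
  have : NeZero M := ⟨hM₀.ne'⟩
  have hα : Fintype.card (Fin M × Fin k) = M * k := by simp
  obtain ⟨col, hcol, hcolored⟩ :=
    exists_isSparseColoring (α := Fin M × Fin k) (β := Fin M × Fin k) (J := Fin M) (k := k)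
      (D := 8 * k) (by omega)
      (by rw [hα, Fintype.card_fin, Nat.mul_div_mul_right _ _ hk]; omega)
      (by rw [hα]; nlinarith)
  have hfiber : ∀ j, #{c : Fin M × Fin k | c.1 = j} = k := fun j => by
    have : ({c : Fin M × Fin k | c.1 = j} : Finset _) = {j} ×ˢ univ := by
      ext c
      simp only [mem_filter, mem_univ, true_and, mem_product, mem_singleton, and_true]
    rw [this]
    simp
  rw [hα] at hcolored
  calc (M * k) ^ (m + 2) * k = M * k * (M * k) * (k * (M * k) ^ m) := by ring
    _ ≤ 2 * #{e | (col e).isSome} * (k * (M * k) ^ m) := Nat.mul_le_mul_right _ hcolored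
    _ = 2 * (#{e | (col e).isSome} * k * (M * k) ^ m) := by ring
    _ ≤ 2 * tightCycleTuran (m + 3) n := by
        refine Nat.mul_le_mul_left _ ?_
        rw [← hα] at hn ⊢
        exact card_colored_mul_le_tightCycleTuran (fun j => (hcol j).not_hasEvenCycle) hfiber hn

theorem pow_mul_le_mul_tightCycleTuran {m k n : ℕ} (hmk : m + 3 ≤ k)
    (hn : (8 * k) ^ (4 * k) ≤ n) :
    n ^ (m + 2) * k ≤ 2 * (2 * (m + 3)) ^ (m + 2) * tightCycleTuran (m + 3) n := by
  have hk : 0 < k := by omega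
  have hd : 0 < (m + 3) * k := by positivity
  set M := n / ((m + 3) * k)
  have hM : 4 * (8 * k) ^ (2 * k) ≤ M := by
    rw [Nat.le_div_iff_mul_le hd]
    calc 4 * (8 * k) ^ (2 * k) * ((m + 3) * k) ≤ 4 * (8 * k) ^ (2 * k) * (k * k) := by gcongr
      _ ≤ 16 * (4 * (8 * k) ^ (2 * k) * (k * k)) := Nat.le_mul_of_pos_left _ (by norm_num)
      _ = (8 * k) ^ (2 * k + 2) := by ring
      _ ≤ (8 * k) ^ (4 * k) := Nat.pow_le_pow_right (by omega) (by omega)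
      _ ≤ n := hn
  have hnM : n ≤ 2 * (m + 3) * (M * k) := by
    have hM₀ : 0 < M := lt_of_lt_of_le (by positivity) hM
    calc n ≤ (m + 3) * k * (M + 1) := (Nat.lt_mul_div_succ n hd).le
      _ ≤ (m + 3) * k * (M + M) := by gcongr; omega
      _ = 2 * (m + 3) * (M * k) := by ring
  calc n ^ (m + 2) * k ≤ (2 * (m + 3) * (M * k)) ^ (m + 2) * k := by gcongr
    _ = (2 * (m + 3)) ^ (m + 2) * ((M * k) ^ (m + 2) * k) := by rw [mul_pow, mul_assoc]
    _ ≤ (2 * (m + 3)) ^ (m + 2) * (2 * tightCycleTuran (m + 3) n) := by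
        refine Nat.mul_le_mul_left _ (pow_mul_le_two_mul_tightCycleTuran hk hM ?_)
        calc (m + 3) * (M * k) = M * ((m + 3) * k) := by ring
          _ ≤ n := Nat.div_mul_le_self n _
    _ = 2 * (2 * (m + 3)) ^ (m + 2) * tightCycleTuran (m + 3) n := by ring

end Turan

section Asymptotics

open Filter Real

theorem tendsto_div_log_atTop : Tendsto (fun x => x / log x) atTop atTop := by
  refine ((tendsto_exp_div_pow_atTop 1).comp tendsto_log_atTop).congr' ?_
  filter_upwards [eventually_gt_atTop 0] with x hx
  simp [exp_log hx]

theorem eventually_exists_pow_le (K : ℕ) : ∀ᶠ n : ℕ in atTop, ∃ k : ℕ, K ≤ k ∧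
    (8 * k) ^ (4 * k) ≤ n ∧ log n / (16 * log (log n)) ≤ k := by
  have hlog : Tendsto (fun n : ℕ => log n) atTop atTop :=
    tendsto_log_atTop.comp tendsto_natCast_atTop_atTop
  filter_upwards [eventually_gt_atTop 0, hlog.eventually_gt_atTop 0,
    (tendsto_log_atTop.comp hlog).eventually_ge_atTop 1,
    (tendsto_div_log_atTop.comp hlog).eventually_ge_atTop (8 * (K + 1))] with n hn hX hY hz
  simp only [Function.comp_apply] at hY hz
  set X := log n
  set z := X / log X / 8 with hz_def
  have hKz : (K : ℝ) + 1 ≤ z := by rw [le_div_iff₀ (by norm_num)]; linarith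
  refine ⟨⌊z⌋₊, Nat.le_floor ((le_add_of_nonneg_right zero_le_one).trans hKz), ?_, ?_⟩
  · have hfloor : 8 * (⌊z⌋₊ : ℝ) ≤ X / log X := by
      rw [← le_div_iff₀' (by norm_num)]
      exact Nat.floor_le (by positivity)
    have hbase : 8 * (⌊z⌋₊ : ℝ) ≤ X := hfloor.trans (div_le_self hX.le hY)
    have hexp : 4 * ⌊z⌋₊ * log X ≤ X :=
      calc 4 * ⌊z⌋₊ * log X ≤ 8 * ⌊z⌋₊ * log X := by gcongr; norm_num
        _ ≤ X := (le_div_iff₀ (by positivity)).1 hfloor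
    have hpow : (8 * (⌊z⌋₊ : ℝ)) ^ (4 * ⌊z⌋₊) ≤ n :=
      calc (8 * (⌊z⌋₊ : ℝ)) ^ (4 * ⌊z⌋₊) ≤ X ^ (4 * ⌊z⌋₊) := by gcongr
        _ = exp (4 * ⌊z⌋₊ * log X) := by
            rw [← exp_log (pow_pos hX _), log_pow]
            push_cast
            rfl
        _ ≤ exp X := exp_le_exp.2 hexp
        _ = n := exp_log (by exact_mod_cast hn)
    exact_mod_cast hpow
  · calc X / (16 * log X) = z / 2 := by rw [hz_def]; ring
      _ ≤ ⌊z⌋₊ := (Nat.div_two_lt_floor (by linarith)).le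

end Asymptotics

/-- For each fixed `r ≥ 3`, `f_r(n) = Ω(n^{r-1} log n / log log n)`. -/
theorem tightCycleTuran_lower_bound (r : ℕ) (hr : 3 ≤ r) :
    ∃ c : ℝ, 0 < c ∧ ∃ N : ℕ, ∀ n : ℕ, N ≤ n →
      c * (n : ℝ) ^ (r - 1) * Real.log n / Real.log (Real.log n) ≤
        (tightCycleTuran r n : ℝ) := by
  obtain ⟨m, rfl⟩ := Nat.exists_eq_add_of_le' hr
  refine ⟨1 / (32 * (2 * (m + 3)) ^ (m + 2)), by positivity, ?_⟩
  obtain ⟨N, hN⟩ := Filter.eventually_atTop.1 (eventually_exists_pow_le (m + 3))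
  refine ⟨N, fun n hn => ?_⟩
  obtain ⟨k, hmk, hkn, hlog⟩ := hN n hn
  have hturan : (n : ℝ) ^ (m + 2) * k ≤
      2 * (2 * (m + 3)) ^ (m + 2) * tightCycleTuran (m + 3) n := by
    exact_mod_cast pow_mul_le_mul_tightCycleTuran hmk hkn
  calc 1 / (32 * (2 * (m + 3)) ^ (m + 2)) * (n : ℝ) ^ (m + 2) * Real.log n / Real.log (Real.log n)
      = (n : ℝ) ^ (m + 2) * (Real.log n / (16 * Real.log (Real.log n))) /
          (2 * (2 * (m + 3)) ^ (m + 2)) := by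
        simp only [div_eq_mul_inv, mul_inv]
        ring
    _ ≤ (n : ℝ) ^ (m + 2) * k / (2 * (2 * (m + 3)) ^ (m + 2)) := by gcongr
    _ ≤ tightCycleTuran (m + 3) n := by
        rw [div_le_iff₀ (by positivity), mul_comm (tightCycleTuran _ _ : ℝ)]
        exact hturan
end

section
/- Let r ≥ 4 and let H be an (r−1)-uniform tight-cycle-free hypergraph on a vertex set V(H) of size n. Form the r-uniform hypergraph H' whose vertex set is the disjoint union of V(H) and [n] = {1, …, n}, and whose edges are all sets e ∪ {i} with e ∈ E(H) and i ∈ [n]. Then H' is tight-cycle-free and has exactly n · |E(H)| edges. -/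
/-!
Unroll a tight cycle of the cone into a periodic sequence on `ℕ`. Every window of `s + 1`
consecutive terms contains exactly one apex, so the apexes sit in a single residue class modulo
`s + 1`; in particular `s + 1` divides the length `(s + 1) * m`. Deleting the apexes leaves a
periodic sequence with minimal period `s * m`, and each of its `s`-windows is what remains of an
`(s + 1)`-window, hence an edge of the base hypergraph: it is a tight cycle there.
-/

section Skip

variable {s : ℕ}

/-- For `0 < s`, the increasing enumeration, starting at `k = 0`, of the natural numbers not
divisible by `s + 1`: these are the positions left in a sequence after deleting every term whose
index is a multiple of `s + 1`. -/
def skipMultiples (s k : ℕ) : ℕ :=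
  k + k / s + 1

lemma skipMultiples_strictMono (s : ℕ) : StrictMono (skipMultiples s) := by
  intro k l hkl
  have := Nat.div_le_div_right (c := s) hkl.le
  unfold skipMultiples
  lia

lemma skipMultiples_add_mul (hs : 0 < s) (k d : ℕ) :
    skipMultiples s (k + s * d) = skipMultiples s k + (s + 1) * d := by
  rw [skipMultiples, skipMultiples, Nat.add_mul_div_left _ _ hs]
  ring

lemma mem_range_skipMultiples_iff (hs : 0 < s) {n : ℕ} :
    n ∈ Set.range (skipMultiples s) ↔ ¬ s + 1 ∣ n := by
  rw [Nat.not_dvd_iff_lt_mul_succ n s.succ_pos]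
  constructor
  · rintro ⟨k, rfl⟩
    have hlower := Nat.mul_div_le k s
    have hupper := Nat.lt_mul_div_succ k hs
    refine ⟨k / s, ?_, ?_⟩ <;> unfold skipMultiples <;> linarith
  · rintro ⟨q, hlower, hupper⟩
    obtain ⟨k, rfl⟩ : ∃ k, n = k + q + 1 := ⟨n - q - 1, by lia⟩
    have hq : k / s = q := Nat.div_eq_of_lt_le (by linarith) (by linarith)
    exact ⟨k, by rw [skipMultiples, hq]⟩

lemma image_skipMultiples_Ico (hs : 0 < s) (k : ℕ) :
    (Finset.Ico k (k + s)).image (skipMultiples s) =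
      {n ∈ Finset.Ico (skipMultiples s k) (skipMultiples s k + (s + 1)) | ¬ s + 1 ∣ n} := by
  have hend : skipMultiples s (k + s) = skipMultiples s k + (s + 1) := by
    simpa using skipMultiples_add_mul hs k 1
  have hmono := skipMultiples_strictMono s
  ext n
  simp only [Finset.mem_image, Finset.mem_filter, Finset.mem_Ico,
    ← mem_range_skipMultiples_iff hs, ← hend]
  constructor
  · rintro ⟨i, hi, rfl⟩
    exact ⟨⟨hmono.le_iff_le.2 hi.1, hmono hi.2⟩, i, rfl⟩
  · rintro ⟨hn, i, rfl⟩
    exact ⟨i, ⟨hmono.le_iff_le.1 hn.1, hmono.lt_iff_lt.1 hn.2⟩, rfl⟩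

lemma skipMultiples_modEq_iff (hs : 0 < s) {m k l : ℕ} :
    skipMultiples s k ≡ skipMultiples s l [MOD (s + 1) * m] ↔ k ≡ l [MOD s * m] := by
  wlog hkl : k ≤ l generalizing k l
  · rw [Nat.ModEq.comm, this (le_of_not_ge hkl), Nat.ModEq.comm]
  have hmono := skipMultiples_strictMono s
  rw [Nat.modEq_iff_dvd' (hmono.monotone hkl), Nat.modEq_iff_dvd' hkl]
  constructor
  · rintro ⟨d, hd⟩
    have : skipMultiples s l = skipMultiples s (k + s * (m * d)) := by
      have := hmono.monotone hkl
      rw [skipMultiples_add_mul hs, ← mul_assoc]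
      lia
    exact ⟨d, by rw [hmono.injective this, Nat.add_sub_cancel_left, mul_assoc]⟩
  · rintro ⟨d, hd⟩
    obtain rfl : l = k + s * (m * d) := by
      rw [← mul_assoc]
      lia
    exact ⟨d, by rw [skipMultiples_add_mul hs, Nat.add_sub_cancel_left, mul_assoc]⟩

end Skip

section UniqueInWindows

variable {P : ℕ → Prop} {r : ℕ}

lemma periodic_of_existsUnique_mem_Ico (h : ∀ k, ∃! i, i ∈ Finset.Ico k (k + r) ∧ P i) :
    Function.Periodic P r := by
  intro k
  obtain ⟨i, ⟨hi, hPi⟩, hunique⟩ := h k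
  obtain ⟨i', ⟨hi', hPi'⟩, hunique'⟩ := h (k + 1)
  simp only [Finset.mem_Ico] at hi hi' hunique hunique'
  refine propext ⟨fun hP => ?_, fun hP => ?_⟩
  · by_contra hk
    have hne : i ≠ k := by rintro rfl; exact hk hPi
    have := hunique' i ⟨by lia, hPi⟩
    have := hunique' (k + r) ⟨by lia, hP⟩
    lia
  · by_contra hk
    have hne : i' ≠ k + r := by rintro rfl; exact hk hPi'
    have := hunique i' ⟨by lia, hPi'⟩
    have := hunique k ⟨by lia, hP⟩
    lia

lemma iff_dvd_of_existsUnique_mem_Ico (h : ∀ k, ∃! i, i ∈ Finset.Ico k (k + r) ∧ P i)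
    (h0 : P 0) (k : ℕ) : P k ↔ r ∣ k := by
  have hr : 0 < r := by
    obtain ⟨i, ⟨hi, -⟩, -⟩ := h 0
    rw [Finset.mem_Ico] at hi
    lia
  rw [← (periodic_of_existsUnique_mem_Ico h).map_mod_nat k, Nat.dvd_iff_mod_eq_zero]
  refine ⟨fun hP => ?_, fun hk => hk ▸ h0⟩
  exact (h 0).unique ⟨by simpa using Nat.mod_lt k hr, hP⟩ ⟨by simpa using hr, h0⟩

end UniqueInWindows

section TightCycleSeq

variable {V : Type*} [DecidableEq V] {r ℓ : ℕ} {E : Set (Finset V)} {w : ℕ → V}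

/-- A tight cycle of length `ℓ` unrolled along `ℕ`: indices congruent modulo `ℓ` stand for the
same vertex. The position arithmetic of the cycle can then be done in the ordered type `ℕ`. -/
structure IsTightCycleSeq (r ℓ : ℕ) (E : Set (Finset V)) (w : ℕ → V) : Prop where
  eq_iff_modEq : ∀ a b, w a = w b ↔ a ≡ b [MOD ℓ]
  image_Ico_mem : ∀ k, (Finset.Ico k (k + r)).image w ∈ E

lemma tightWindow_natCast (v : ZMod ℓ → V) (k : ℕ) :
    tightWindow r v k = (Finset.Ico k (k + r)).image (fun i : ℕ => v i) := by
  ext x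
  simp only [tightWindow, ← Nat.cast_add, Finset.mem_image, Finset.mem_univ, true_and,
    Finset.mem_Ico, Fin.exists_iff]
  constructor
  · rintro ⟨j, hj, rfl⟩
    exact ⟨k + j, by lia, rfl⟩
  · rintro ⟨i, hi, rfl⟩
    exact ⟨i - k, by lia, by rw [Nat.add_sub_of_le hi.1]⟩

lemma isTightCycleIn_iff_exists_isTightCycleSeq [NeZero ℓ] :
    IsTightCycleIn r ℓ E ↔ ∃ w, IsTightCycleSeq r ℓ E w := by
  constructor
  · rintro ⟨v, hv, hmem⟩
    refine ⟨fun i => v i, fun a b => ?_, fun k => ?_⟩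
    · rw [hv.eq_iff, ZMod.natCast_eq_natCast_iff]
    · rw [← tightWindow_natCast]
      exact hmem k
  · rintro ⟨w, hw⟩
    have hval (k : ℕ) : w (k : ZMod ℓ).val = w k := by
      rw [hw.eq_iff_modEq, ZMod.val_natCast]
      exact Nat.mod_modEq k ℓ
    refine ⟨fun x => w x.val, fun x y hxy => ?_, fun x => ?_⟩
    · simpa [← ZMod.natCast_eq_natCast_iff] using (hw.eq_iff_modEq _ _).1 hxy
    · rw [← ZMod.natCast_zmod_val x, tightWindow_natCast]
      simpa only [hval] using hw.image_Ico_mem x.val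

lemma IsTightCycleSeq.shift (hw : IsTightCycleSeq r ℓ E w) (a : ℕ) :
    IsTightCycleSeq r ℓ E (fun k => w (a + k)) where
  eq_iff_modEq k l := by
    rw [hw.eq_iff_modEq]
    exact ⟨Nat.ModEq.add_left_cancel' a, Nat.ModEq.add_left a⟩
  image_Ico_mem k := by
    have := hw.image_Ico_mem (a + k)
    rwa [add_assoc, ← Finset.image_add_left_Ico, Finset.image_image] at this

lemma IsTightCycleSeq.injOn_Ico (hw : IsTightCycleSeq r ℓ E w) (k : ℕ) :
    Set.InjOn w (Finset.Ico k (k + ℓ)) := by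
  intro i hi j hj hij
  simp only [Finset.coe_Ico, Set.mem_Ico] at hi hj
  exact ((hw.eq_iff_modEq i j).1 hij).eq_of_abs_lt (by rw [abs_lt]; lia)

lemma IsTightCycleSeq.dvd_length_of_forall_iff_dvd {P : V → Prop} {d : ℕ}
    (hw : IsTightCycleSeq r ℓ E w) (hP : ∀ k, P (w k) ↔ d ∣ k) : d ∣ ℓ := by
  have hreturn : w ℓ = w 0 := (hw.eq_iff_modEq ℓ 0).2 (by simp [Nat.ModEq])
  rw [← hP, hreturn, hP]
  exact dvd_zero d

end TightCycleSeq

section Cone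

variable {A B : Type*}

/-- The cone over the hypergraph `H` with apexes in `B`: the edges `e ∪ {b}` with `e ∈ H` and
`b : B`. They are described through their two parts, since these are what one reads off a window
of a tight cycle. -/
def hypergraphCone (B : Type*) (H : Set (Finset A)) : Set (Finset (A ⊕ B)) :=
  {f | f.toLeft ∈ H ∧ f.toRight.card = 1}

variable [DecidableEq A] [DecidableEq B]

lemma image_inl_union_singleton_inr (e : Finset A) (b : B) :
    e.image Sum.inl ∪ {Sum.inr b} = e.disjSum {b} := by
  rw [Finset.eq_disjSum_iff]
  constructor <;> ext <;> simp

lemma coe_image_product_eq_hypergraphCone [Fintype B] (H : Finset (Finset A)) :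
    (((H ×ˢ (Finset.univ : Finset B)).image
        fun p : Finset A × B => p.1.image Sum.inl ∪ {Sum.inr p.2} :
      Finset (Finset (A ⊕ B))) : Set (Finset (A ⊕ B))) = hypergraphCone B (H : Set (Finset A)) := by
  ext f
  simp [hypergraphCone, image_inl_union_singleton_inr, Finset.disjSum_eq_iff, Finset.card_eq_one,
    eq_comm (b := f.toRight)]

lemma injective_image_inl_union_singleton_inr :
    Function.Injective
      (fun p : Finset A × B => p.1.image Sum.inl ∪ {Sum.inr p.2}) := by
  rintro ⟨e, b⟩ ⟨e', b'⟩ h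
  simpa [image_inl_union_singleton_inr] using h

variable {r s ℓ m : ℕ} {H : Set (Finset A)} {w : ℕ → A ⊕ B}

namespace IsTightCycleSeq

lemma existsUnique_isRight (hw : IsTightCycleSeq r ℓ (hypergraphCone B H) w) (hℓ : r ≤ ℓ)
    (k : ℕ) : ∃! i, i ∈ Finset.Ico k (k + r) ∧ (w i).isRight := by
  obtain ⟨b, hb⟩ := Finset.card_eq_one.1 (hw.image_Ico_mem k).2
  have hapex (c : B) : (∃ i ∈ Finset.Ico k (k + r), w i = Sum.inr c) ↔ c = b := by
    rw [← Finset.mem_singleton, ← hb, Finset.mem_toRight, Finset.mem_image]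
  obtain ⟨i, hi, hwi⟩ := (hapex b).2 rfl
  refine ⟨i, ⟨hi, by simp [hwi]⟩, ?_⟩
  rintro j ⟨hj, hwj⟩
  obtain ⟨c, hc⟩ := Sum.isRight_iff.1 hwj
  obtain rfl : c = b := (hapex c).1 ⟨j, hj, hc⟩
  have hsub := Finset.Ico_subset_Ico_right (a := k) (Nat.add_le_add_left hℓ k)
  exact hw.injOn_Ico k (hsub hj) (hsub hi) (hc.trans hwi.symm)

lemma exists_forall_isRight_iff_dvd (hw : IsTightCycleSeq r ℓ (hypergraphCone B H) w)
    (hℓ : r ≤ ℓ) :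
    ∃ w', IsTightCycleSeq r ℓ (hypergraphCone B H) w' ∧ ∀ k, (w' k).isRight ↔ r ∣ k := by
  obtain ⟨a, ⟨-, ha⟩, -⟩ := hw.existsUnique_isRight hℓ 0
  exact ⟨_, hw.shift a,
    iff_dvd_of_existsUnique_mem_Ico ((hw.shift a).existsUnique_isRight hℓ) ha⟩

lemma exists_isTightCycleSeq_base (hs : 0 < s)
    (hw : IsTightCycleSeq (s + 1) ((s + 1) * m) (hypergraphCone B H) w)
    (hapex : ∀ k, (w k).isRight ↔ s + 1 ∣ k) : ∃ u, IsTightCycleSeq s (s * m) H u := by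
  have hleft (k : ℕ) : ∃ a, w (skipMultiples s k) = Sum.inl a := by
    rw [← Sum.isLeft_iff, ← Sum.not_isRight, hapex, ← mem_range_skipMultiples_iff hs]
    exact Set.mem_range_self k
  choose u hu using hleft
  refine ⟨u, fun k l => ?_, fun k => ?_⟩
  · rw [← (Sum.inl_injective (β := B)).eq_iff, ← hu, ← hu, hw.eq_iff_modEq,
      skipMultiples_modEq_iff hs]
  · suffices hwindow : (Finset.Ico k (k + s)).image u =
        ((Finset.Ico (skipMultiples s k) (skipMultiples s k + (s + 1))).image w).toLeft by
      rw [hwindow]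
      exact (hw.image_Ico_mem (skipMultiples s k)).1
    ext a
    have hbase {n : ℕ} (hn : w n = Sum.inl a) : ¬ s + 1 ∣ n := by simp [← hapex, hn]
    calc a ∈ (Finset.Ico k (k + s)).image u
        ↔ Sum.inl a ∈ ((Finset.Ico k (k + s)).image (skipMultiples s)).image w := by
          simp [hu]
      _ ↔ a ∈ ((Finset.Ico (skipMultiples s k) (skipMultiples s k + (s + 1))).image w).toLeft := by
          rw [image_skipMultiples_Ico hs, Finset.mem_toLeft]
          simp only [Finset.mem_image, Finset.mem_filter]
          exact ⟨fun ⟨n, hn, hwn⟩ => ⟨n, hn.1, hwn⟩,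
            fun ⟨n, hn, hwn⟩ => ⟨n, ⟨hn, hbase hwn⟩, hwn⟩⟩

end IsTightCycleSeq

theorem TightCycleFree.hypergraphCone (hs : 0 < s) (hfree : TightCycleFree s H) :
    TightCycleFree (s + 1) (hypergraphCone B H) := by
  rintro ⟨ℓ, hℓ, hcycle⟩
  have : NeZero ℓ := ⟨by lia⟩
  obtain ⟨w₀, hw₀⟩ := isTightCycleIn_iff_exists_isTightCycleSeq.1 hcycle
  obtain ⟨w, hw, hapex⟩ := hw₀.exists_forall_isRight_iff_dvd hℓ.le
  obtain ⟨m, rfl⟩ := hw.dvd_length_of_forall_iff_dvd (P := (·.isRight)) hapex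
  have hm : 1 < m := (Nat.lt_mul_iff_one_lt_right s.succ_pos).1 hℓ
  have : NeZero (s * m) := ⟨by positivity⟩
  exact hfree ⟨s * m, (Nat.lt_mul_iff_one_lt_right hs).2 hm,
    isTightCycleIn_iff_exists_isTightCycleSeq.2 (hw.exists_isTightCycleSeq_base hs hapex)⟩

theorem cone_construction_tightCycleFree_general [Fintype B] (hs : 0 < s)
    (H : Finset (Finset A)) (hfree : TightCycleFree s (H : Set (Finset A))) :
    TightCycleFree (s + 1)
      (((H ×ˢ (Finset.univ : Finset B)).image
          fun p : Finset A × B => p.1.image Sum.inl ∪ {Sum.inr p.2} :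
        Finset (Finset (A ⊕ B))) : Set (Finset (A ⊕ B))) ∧
    ((H ×ˢ (Finset.univ : Finset B)).image
        fun p : Finset A × B => p.1.image Sum.inl ∪ {Sum.inr p.2}).card =
      Fintype.card B * H.card := by
  constructor
  · rw [coe_image_product_eq_hypergraphCone]
    exact hfree.hypergraphCone hs
  · rw [Finset.card_image_of_injective _ injective_image_inl_union_singleton_inr,
      Finset.card_product, Finset.card_univ, mul_comm]

end Cone

/-- Adding a new vertex from `[n]` in all possible ways to each edge of an
`(r-1)`-uniform tight-cycle-free hypergraph `H` on `n` vertices yields an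
`r`-uniform tight-cycle-free hypergraph with `n * |E(H)|` edges. -/
theorem cone_construction_tightCycleFree {A : Type*} [DecidableEq A] [Fintype A]
    (r n : ℕ) (hr : 4 ≤ r) (hA : Fintype.card A = n)
    (H : Finset (Finset A)) (hunif : ∀ e ∈ H, e.card = r - 1)
    (hfree : TightCycleFree (r - 1) (H : Set (Finset A))) :
    TightCycleFree r
      ((Finset.image
          (fun p : Finset A × Fin n =>
            p.1.image Sum.inl ∪ {Sum.inr p.2})
          (H ×ˢ (Finset.univ : Finset (Fin n)))
        : Finset (Finset (A ⊕ Fin n))) : Set (Finset (A ⊕ Fin n))) ∧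
    (Finset.image
        (fun p : Finset A × Fin n => p.1.image Sum.inl ∪ {Sum.inr p.2})
        (H ×ˢ (Finset.univ : Finset (Fin n)))).card = n * H.card := by
  obtain ⟨s, rfl⟩ := Nat.exists_eq_add_of_le' (by lia : 1 ≤ r)
  simpa using cone_construction_tightCycleFree_general (B := Fin n) (by lia) H hfree
end
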